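/- Assume that for every x ∈ 𝒳 the map ξ ↦ c(x, ξ) is quasiconvex, and that scenarios are equiprobable: π^(s) = 1/N for every s. Fix S ⊆ {1,…,N}, let Ξ = conv({ξ^(s̃) : s̃ ∈ S}), let V(S) = {s̃ ∈ S : ξ^(s̃) is an extreme point of Ξ} and N(S) = {s ∈ {1,…,N} : ξ^(s) ∈ Ξ}, and suppose |N(S)|/N ≥ (1 − τ) + 1/N. Then F*_τ equals the infimum of F(x) over all pairs (x, z) with x ∈ 𝒳, z ∈ {0,1}^N, Σ_{s̃ : z_s̃ = 1} π^(s̃) ≥ 1 − τ, c(x, ξ^(s̃)) ≤ 0 whenever z_s̃ = 1, and additionally Σ_{s̃∈V(S)} z_s̃ ≤ |V(S)| − 1; i.e., the inequality Σ_{s̃∈V(S)} z_s̃ ≤ |V(S)| − 1 is valid for the chance-constrained problem. -/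

import Mathlib

open scoped Classical
open Finset

noncomputable section

variable {N d p : ℕ}

/-- The set of CCP-feasible points. -/
def ccpFeasible (X : Set (Fin d → ℝ)) (c : (Fin d → ℝ) → (Fin p → ℝ) → ℝ)
    (ξ : Fin N → (Fin p → ℝ)) (π : Fin N → ℝ) (τ : ℝ) : Set (Fin d → ℝ) :=
  {x | x ∈ X ∧ 1 - τ ≤ ∑ s ∈ Finset.univ.filter (fun s => c x (ξ s) ≤ 0), π s}

/-- Infimum, in the extended reals, of `F` over `A` (`⊤` if `A = ∅`). -/
def einf (F : (Fin d → ℝ) → ℝ) (A : Set (Fin d → ℝ)) : EReal :=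
  sInf ((fun x => (F x : EReal)) '' A)

/-- `F*_τ`: optimal value of the chance-constrained problem. -/
def Fstar (X : Set (Fin d → ℝ)) (F : (Fin d → ℝ) → ℝ)
    (c : (Fin d → ℝ) → (Fin p → ℝ) → ℝ) (ξ : Fin N → (Fin p → ℝ))
    (π : Fin N → ℝ) (τ : ℝ) : EReal :=
  einf F (ccpFeasible X c ξ π τ)

/-- `ν(S)`: optimal value of the `S`-subproblem. -/
def nuVal (X : Set (Fin d → ℝ)) (F : (Fin d → ℝ) → ℝ)
    (c : (Fin d → ℝ) → (Fin p → ℝ) → ℝ) (ξ : Fin N → (Fin p → ℝ))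
    (S : Finset (Fin N)) : EReal :=
  einf F {x | x ∈ X ∧ ∀ s ∈ S, c x (ξ s) ≤ 0}

/-- Safe set. -/
def IsSafeSet (X : Set (Fin d → ℝ)) (F : (Fin d → ℝ) → ℝ)
    (c : (Fin d → ℝ) → (Fin p → ℝ) → ℝ) (ξ : Fin N → (Fin p → ℝ))
    (π : Fin N → ℝ) (τ : ℝ) (Plus : Finset (Fin N)) : Prop :=
  einf F {x | x ∈ ccpFeasible X c ξ π τ ∧ ∀ s ∈ Plus, c x (ξ s) ≤ 0}
    = Fstar X F c ξ π τ

/-- Pruned set. -/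
def IsPrunedSet (X : Set (Fin d → ℝ)) (F : (Fin d → ℝ) → ℝ)
    (c : (Fin d → ℝ) → (Fin p → ℝ) → ℝ) (ξ : Fin N → (Fin p → ℝ))
    (π : Fin N → ℝ) (τ : ℝ) (Minus : Finset (Fin N)) : Prop :=
  einf F {x | x ∈ X ∧
      1 - τ ≤ ∑ s ∈ Finset.univ.filter (fun s => s ∉ Minus ∧ c x (ξ s) ≤ 0), π s}
    = Fstar X F c ξ π τ

/-- Minimal subset. -/
def IsMinimalSubset (π : Fin N → ℝ) (τ : ℝ) (S : Finset (Fin N)) : Prop :=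
  1 - τ ≤ ∑ s ∈ S, π s ∧ ∀ t ∈ S, ∑ s ∈ S, π s < 1 - τ + π t

/-- `V(S)`: indices of scenarios in `S` that are extreme points (vertices) of
`Ξ = conv {ξ t | t ∈ S}`. -/
def vertSet (ξ : Fin N → (Fin p → ℝ)) (S : Finset (Fin N)) : Finset (Fin N) :=
  S.filter (fun t => ξ t ∈ Set.extremePoints ℝ (convexHull ℝ (ξ '' ↑S)))

/-- `N(S)`: indices of all scenarios contained in `Ξ = conv {ξ t | t ∈ S}`. -/
def hullSet (ξ : Fin N → (Fin p → ℝ)) (S : Finset (Fin N)) : Finset (Fin N) :=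
  Finset.univ.filter (fun s => ξ s ∈ convexHull ℝ (ξ '' ↑S))

/-!
If a point `x` violates a vertex of `Ξ`, then its satisfied scenarios already obey the cut.
Otherwise `x` satisfies every vertex of `Ξ`, hence by Krein–Milman and the convexity of
`{ζ | c x ζ ≤ 0}` every scenario in `Ξ`; these are heavy enough that one vertex can be deselected
without losing the probability level.
-/

section ConvexHull

variable {E : Type*} [AddCommGroup E] [Module ℝ E] [TopologicalSpace E] [T2Space E]
  [IsTopologicalAddGroup E] [ContinuousSMul ℝ E] [LocallyConvexSpace ℝ E] {s K : Set E}

theorem convexHull_extremePoints_convexHull_of_finite (hs : s.Finite) :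
    convexHull ℝ ((convexHull ℝ s).extremePoints ℝ) = convexHull ℝ s := by
  have hext : ((convexHull ℝ s).extremePoints ℝ).Finite :=
    hs.subset extremePoints_convexHull_subset
  rw [← (hext.isClosed_convexHull ℝ).closure_eq]
  exact closure_convexHull_extremePoints (hs.isCompact_convexHull ℝ) (convex_convexHull ℝ s)

theorem convexHull_image_subset_of_extremePoints {ι : Type*} {S : Finset ι} {ξ : ι → E}
    (hK : Convex ℝ K) (hξK : ∀ t ∈ S, ξ t ∈ (convexHull ℝ (ξ '' S)).extremePoints ℝ → ξ t ∈ K) :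
    convexHull ℝ (ξ '' S) ⊆ K := by
  rw [← convexHull_extremePoints_convexHull_of_finite (S.finite_toSet.image ξ)]
  refine convexHull_min (fun ζ hζ => ?_) hK
  obtain ⟨t, ht, rfl⟩ := extremePoints_convexHull_subset hζ
  exact hξK t ht hζ

theorem extremePoints_convexHull_nonempty_of_finite (hs : s.Finite)
    (hne : (convexHull ℝ s).Nonempty) : ((convexHull ℝ s).extremePoints ℝ).Nonempty := by
  rwa [← convexHull_nonempty_iff (𝕜 := ℝ), convexHull_extremePoints_convexHull_of_finite hs]

end ConvexHull

theorem sum_boole_mem_le_card_sub_one_iff {ι : Type*} {B V : Finset ι} :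
    ∑ t ∈ V, (if t ∈ B then (1 : ℝ) else 0) ≤ (#V : ℝ) - 1 ↔ ¬ V ⊆ B := by
  have hcard : #{t ∈ V | t ∈ B} < #V ↔ ¬ V ⊆ B := by
    rw [(card_filter_le V _).lt_iff_ne, Ne, card_filter_eq_iff, subset_iff]
  rw [sum_boole, le_sub_iff_add_le, ← hcard]
  norm_cast

section MixedBinary

variable {α ι : Type*} [Fintype ι] {X : Set α} {g : α → ι → ℝ} {π : ι → ℝ} {θ : ℝ}
  {H V : Finset ι} {x : α} {v : ι}

/-- The feasible pairs `(x, z)` of the mixed-binary formulation of the chance constraint at level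
`θ`, strengthened by the cut `∑ t ∈ V, z t ≤ |V| - 1`. Scenario `t` is satisfied at `x` when
`g x t ≤ 0`; the binary variable `z t` is a real number, and `z t = 1` forces scenario `t` to be
satisfied. -/
def cutFeasible (X : Set α) (g : α → ι → ℝ) (π : ι → ℝ) (θ : ℝ) (V : Finset ι) :
    Set (α × (ι → ℝ)) :=
  {q | q.1 ∈ X ∧ (∀ t, q.2 t = 0 ∨ q.2 t = 1) ∧
    (θ ≤ ∑ t with q.2 t = 1, π t) ∧
    (∀ t, q.2 t = 1 → g q.1 t ≤ 0) ∧
    ∑ t ∈ V, q.2 t ≤ (#V : ℝ) - 1}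

theorem mk_boole_mem_cutFeasible_iff {B : Finset ι} :
    (x, fun t => if t ∈ B then (1 : ℝ) else 0) ∈ cutFeasible X g π θ V ↔
      x ∈ X ∧ θ ≤ ∑ t ∈ B, π t ∧ (∀ t ∈ B, g x t ≤ 0) ∧ ¬ V ⊆ B := by
  have hzero (t : ι) : (if t ∈ B then (1 : ℝ) else 0) = 0 ↔ t ∉ B := by simp
  have hone (t : ι) : (if t ∈ B then (1 : ℝ) else 0) = 1 ↔ t ∈ B := by simp
  simp only [cutFeasible, Set.mem_ofPred_eq, hzero, hone, em', implies_true, true_and,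
    filter_univ_mem, sum_boole_mem_le_card_sub_one_iff]

theorem le_sum_satisfied_of_le_sum {B : Finset ι} (hπ : ∀ t, 0 ≤ π t) (hB : θ ≤ ∑ t ∈ B, π t)
    (hsat : ∀ t ∈ B, g x t ≤ 0) : θ ≤ ∑ t with g x t ≤ 0, π t :=
  hB.trans <| sum_le_sum_of_subset_of_nonneg
    (fun t ht => mem_filter.2 ⟨mem_univ t, hsat t ht⟩) fun t _ _ => hπ t

theorem exists_satisfied_not_subset (hV : (∀ t ∈ V, g x t ≤ 0) → ∀ t ∈ H, g x t ≤ 0)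
    (hv : v ∈ V) (hmass : θ ≤ ∑ t ∈ H.erase v, π t) (hx : θ ≤ ∑ t with g x t ≤ 0, π t) :
    ∃ B : Finset ι, θ ≤ ∑ t ∈ B, π t ∧ (∀ t ∈ B, g x t ≤ 0) ∧ ¬ V ⊆ B := by
  by_cases hsat : ∀ t ∈ V, g x t ≤ 0
  · exact ⟨H.erase v, hmass, fun t ht => hV hsat t (mem_of_mem_erase ht),
      fun hsub => notMem_erase v H (hsub hv)⟩
  · refine ⟨({t | g x t ≤ 0} : Finset ι), hx, fun t ht => (mem_filter.1 ht).2, fun hsub => ?_⟩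
    exact hsat fun t ht => (mem_filter.1 (hsub ht)).2

theorem image_fst_cutFeasible (hπ : ∀ t, 0 ≤ π t)
    (hV : ∀ x ∈ X, (∀ t ∈ V, g x t ≤ 0) → ∀ t ∈ H, g x t ≤ 0)
    (hv : v ∈ V) (hmass : θ ≤ ∑ t ∈ H.erase v, π t) :
    Prod.fst '' cutFeasible X g π θ V = {x | x ∈ X ∧ θ ≤ ∑ t with g x t ≤ 0, π t} := by
  ext x
  constructor
  · rintro ⟨⟨x, z⟩, ⟨hxX, -, hz, hsat, -⟩, rfl⟩
    exact ⟨hxX, le_sum_satisfied_of_le_sum hπ hz fun t ht => hsat t (mem_filter.1 ht).2⟩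
  · rintro ⟨hxX, hx⟩
    obtain ⟨B, hB⟩ := exists_satisfied_not_subset (hV x hxX) hv hmass hx
    exact ⟨_, mk_boole_mem_cutFeasible_iff.2 ⟨hxX, hB⟩, rfl⟩

end MixedBinary

theorem vertSet_nonempty_of_hullSet_nonempty {ξ : Fin N → Fin p → ℝ} {S : Finset (Fin N)}
    (h : (hullSet ξ S).Nonempty) : (vertSet ξ S).Nonempty := by
  obtain ⟨t, ht⟩ := h
  obtain ⟨ζ, hζ⟩ := extremePoints_convexHull_nonempty_of_finite (S.finite_toSet.image ξ)
    ⟨ξ t, (mem_filter.1 ht).2⟩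
  obtain ⟨v, hvS, rfl⟩ := extremePoints_convexHull_subset hζ
  exact ⟨v, mem_filter.2 ⟨hvS, hζ⟩⟩

theorem exists_mem_vertSet_add_le_sum_hullSet {ξ : Fin N → Fin p → ℝ} {π : Fin N → ℝ} {θ : ℝ}
    {S : Finset (Fin N)} (hθ : 0 < θ) (hequi : ∀ s, π s = 1 / N)
    (hcard : θ + 1 / N ≤ (#(hullSet ξ S) : ℝ) / N) :
    ∃ v ∈ vertSet ξ S, θ + π v ≤ ∑ s ∈ hullSet ξ S, π s := by
  have hsum : ∑ s ∈ hullSet ξ S, π s = (#(hullSet ξ S) : ℝ) / N := by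
    simp only [hequi, sum_const, nsmul_eq_mul, mul_one_div]
  have hpos : 0 < ∑ s ∈ hullSet ξ S, π s := by
    rw [hsum]
    exact (add_pos_of_pos_of_nonneg hθ (by positivity)).trans_le hcard
  obtain ⟨v, hv⟩ := vertSet_nonempty_of_hullSet_nonempty (nonempty_of_sum_ne_zero hpos.ne')
  exact ⟨v, hv, by rwa [hsum, hequi v]⟩

theorem statement_8_general {α ι E : Type*} [Fintype ι] [AddCommGroup E] [Module ℝ E]
    [TopologicalSpace E] [T2Space E] [IsTopologicalAddGroup E] [ContinuousSMul ℝ E]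
    [LocallyConvexSpace ℝ E] (X : Set α) (F : α → EReal) (c : α → E → ℝ) (ξ : ι → E)
    (π : ι → ℝ) (θ : ℝ) (hπ : ∀ t, 0 ≤ π t) (hconv : ∀ x ∈ X, Convex ℝ {ζ | c x ζ ≤ 0})
    (S : Finset ι) (v : ι) (hvS : v ∈ S)
    (hv : ξ v ∈ (convexHull ℝ (ξ '' S)).extremePoints ℝ)
    (hmass : θ + π v ≤ ∑ t with ξ t ∈ convexHull ℝ (ξ '' S), π t) :
    sInf (F '' {x | x ∈ X ∧ θ ≤ ∑ t with c x (ξ t) ≤ 0, π t}) =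
      sInf ((fun q => F q.1) '' cutFeasible X (fun x t => c x (ξ t)) π θ
        {t ∈ S | ξ t ∈ (convexHull ℝ (ξ '' S)).extremePoints ℝ}) := by
  have herase : θ ≤ ∑ t ∈ ({t | ξ t ∈ convexHull ℝ (ξ '' S)} : Finset ι).erase v, π t := by
    rwa [sum_erase_eq_sub (mem_filter.2 ⟨mem_univ v, hv.1⟩), le_sub_iff_add_le]
  have hhull (x) (hx : x ∈ X)
      (hsat : ∀ t ∈ {t ∈ S | ξ t ∈ (convexHull ℝ (ξ '' S)).extremePoints ℝ}, c x (ξ t) ≤ 0) :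
      ∀ t ∈ ({t | ξ t ∈ convexHull ℝ (ξ '' S)} : Finset ι), c x (ξ t) ≤ 0 := fun t ht =>
    convexHull_image_subset_of_extremePoints (hconv x hx)
      (fun s hsS hs => hsat s (mem_filter.2 ⟨hsS, hs⟩)) (mem_filter.1 ht).2
  rw [← image_fst_cutFeasible hπ hhull (mem_filter.2 ⟨hvS, hv⟩) herase, Set.image_image]

theorem statement_8 {N d p : ℕ}
    (hN : 1 ≤ N) (hd : 1 ≤ d) (hp : 1 ≤ p)
    (X : Set (Fin d → ℝ)) (F : (Fin d → ℝ) → ℝ)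
    (c : (Fin d → ℝ) → (Fin p → ℝ) → ℝ) (ξ : Fin N → (Fin p → ℝ))
    (π : Fin N → ℝ) (τ : ℝ)
    (hπ : ∀ s, 0 < π s) (hπsum : ∑ s, π s = 1) (hτ0 : 0 < τ) (hτ1 : τ < 1)
    (hqc : ∀ x ∈ X, QuasiconvexOn ℝ Set.univ (c x))
    (hequi : ∀ s, π s = 1 / N)
    (S : Finset (Fin N))
    (hcard : (1 - τ) + 1 / N ≤ ((hullSet ξ S).card : ℝ) / N) :
    Fstar X F c ξ π τ =
      sInf ((fun q : (Fin d → ℝ) × (Fin N → ℝ) => (F q.1 : EReal)) ''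
        {q | q.1 ∈ X ∧ (∀ t, q.2 t = 0 ∨ q.2 t = 1) ∧
          (1 - τ ≤ ∑ t ∈ Finset.univ.filter (fun t => q.2 t = 1), π t) ∧
          (∀ t, q.2 t = 1 → c q.1 (ξ t) ≤ 0) ∧
          ∑ t ∈ vertSet ξ S, q.2 t ≤ ((vertSet ξ S).card : ℝ) - 1}) := by
  obtain ⟨v, hv, hmass⟩ :=
    exists_mem_vertSet_add_le_sum_hullSet (sub_pos.2 hτ1) hequi hcard
  exact statement_8_general X (fun x => (F x : EReal)) c ξ π (1 - τ) (fun s => (hπ s).le)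
    (fun x hx => by simpa only [Set.mem_univ, true_and] using hqc x hx 0)
    S v (mem_filter.1 hv).1 (mem_filter.1 hv).2 hmass
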